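/- arXiv:2007.14944 — 2 statements merged into one kernel-verified Lean document; each statement's English description precedes it below -/
import Mathlib

section
/- Let B₁, B₂, …, B_n be events in a probability space. Suppose that each event B_i is mutually independent of all but at most d of the other events, and that Pr(B_i) ≤ p for all 1 ≤ i ≤ n. If e·p·(d+1) ≤ 1, then Pr(⋂_{i=1}^n B_i^c) > 0. -/
/-!
Fix weights `x i ∈ [0, 1)` with `Pr(B i) ≤ x i * ∏ j ∈ J i, (1 - x j)`, where `J i` collects the
events on which `B i` may depend. By strong induction on `S`, avoiding the events of `S ∌ i` leaves
`B i` with conditional probability at most `x i`: dropping from `S` the events of `J i` gives a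
numerator at most `Pr(B i)` times the probability of avoiding `S \ J i`, and putting these events
back one at a time costs, by the induction hypothesis, at most the factor `∏ j ∈ J i, (1 - x j)`.
Hence all events of `S` are avoided with probability at least `∏ j ∈ S, (1 - x j)`. The constant
weight `x = 1 / (d + 2)` gives the symmetric form, because `(1 + 1 / (d + 1)) ^ (d + 1) ≤ e`.
-/

open MeasureTheory
open scoped Classical

/-- The event `A` is mutually independent of the family of events `B`: for every two
disjoint finite subsets `S, T` of the index set,
`Pr(A ∩ ⋂_{j ∈ S} B j ∩ ⋂_{j ∈ T} (B j)ᶜ) = Pr(A) · Pr(⋂_{j ∈ S} B j ∩ ⋂_{j ∈ T} (B j)ᶜ)`. -/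
def MutuallyIndepOf {Ω : Type} [MeasurableSpace Ω] (μ : Measure Ω) (A : Set Ω)
    {ι : Type} (B : ι → Set Ω) : Prop :=
  ∀ S T : Finset ι, Disjoint S T →
    μ (A ∩ ((⋂ j ∈ S, B j) ∩ ⋂ j ∈ T, (B j)ᶜ)) =
      μ A * μ ((⋂ j ∈ S, B j) ∩ ⋂ j ∈ T, (B j)ᶜ)

/-- `J` is a lopsidependency digraph of the events `B` (Erdős and Spencer): avoiding events outside
`J i` never makes `B i` more likely. The inequality is multiplied out, so that it also covers
collections of events that are avoided with probability zero. -/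
def IsLopsidependency {Ω ι : Type*} [MeasurableSpace Ω] (μ : Measure Ω) (B : ι → Set Ω)
    (J : ι → Finset ι) : Prop :=
  ∀ i, ∀ S : Finset ι, i ∉ S → Disjoint S (J i) →
    μ.real (B i ∩ ⋂ j ∈ S, (B j)ᶜ) ≤ μ.real (B i) * μ.real (⋂ j ∈ S, (B j)ᶜ)

theorem MutuallyIndepOf.measureReal_inter_biInter_compl {Ω ι : Type} [MeasurableSpace Ω]
    {μ : Measure Ω} {A : Set Ω} {B : ι → Set Ω} (h : MutuallyIndepOf μ A B) (T : Finset ι) :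
    μ.real (A ∩ ⋂ j ∈ T, (B j)ᶜ) = μ.real A * μ.real (⋂ j ∈ T, (B j)ᶜ) := by
  simpa [measureReal_def] using congrArg ENNReal.toReal (h ∅ T (Finset.disjoint_empty_left T))

theorem isLopsidependency_of_mutuallyIndepOf {Ω ι : Type} [MeasurableSpace Ω] {μ : Measure Ω}
    {B : ι → Set Ω} {J : ι → Finset ι}
    (h : ∀ i, MutuallyIndepOf μ (B i) (fun j : {j : ι // j ∉ J i ∧ j ≠ i} => B j)) :
    IsLopsidependency μ B J := by
  intro i S hi hS
  have hmem : ∀ j ∈ S, j ∉ J i ∧ j ≠ i := fun j hj =>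
    ⟨Finset.disjoint_left.mp hS hj, ne_of_mem_of_not_mem hj hi⟩
  have hreindex : ⋂ j ∈ S.subtype (fun j => j ∉ J i ∧ j ≠ i), (B j)ᶜ = ⋂ j ∈ S, (B j)ᶜ := by
    ext ω
    simp only [Set.mem_iInter, Finset.mem_subtype, Subtype.forall]
    exact ⟨fun hω j hj => hω j (hmem j hj) hj, fun hω j _ hj => hω j hj⟩
  have hindep := (h i).measureReal_inter_biInter_compl (S.subtype _)
  rw [hreindex] at hindep
  exact hindep.le

section LocalLemma

variable {Ω ι : Type*} [MeasurableSpace Ω] {μ : Measure Ω} {B : ι → Set Ω} {x : ι → ℝ}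

theorem measureReal_biInter_compl_insert [IsFiniteMeasure μ] {i : ι} (hB : MeasurableSet (B i))
    (S : Finset ι) :
    μ.real (⋂ j ∈ insert i S, (B j)ᶜ) =
      μ.real (⋂ j ∈ S, (B j)ᶜ) - μ.real (B i ∩ ⋂ j ∈ S, (B j)ᶜ) := by
  rw [Finset.set_biInter_insert, Set.inter_comm, ← Set.sdiff_eq, Set.inter_comm (B i),
    eq_sub_iff_add_eq']
  exact measureReal_inter_add_sdiff hB

theorem prod_one_sub_mul_measureReal_biInter_compl_le [IsFiniteMeasure μ] {S T : Finset ι}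
    (hB : ∀ i ∈ T, MeasurableSet (B i)) (hx : ∀ i ∈ T, x i ≤ 1) (hST : Disjoint S T)
    (h : ∀ i ∈ T, ∀ U ⊆ S ∪ T, i ∉ U →
      μ.real (B i ∩ ⋂ j ∈ U, (B j)ᶜ) ≤ x i * μ.real (⋂ j ∈ U, (B j)ᶜ)) :
    (∏ j ∈ T, (1 - x j)) * μ.real (⋂ j ∈ S, (B j)ᶜ) ≤ μ.real (⋂ j ∈ S ∪ T, (B j)ᶜ) := by
  induction T using Finset.induction_on with
  | empty => simp
  | insert a T ha ih =>
    rw [Finset.disjoint_insert_right] at hST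
    rw [Finset.forall_mem_insert] at hB hx h
    rw [Finset.union_insert] at h ⊢
    have hsub : S ∪ T ⊆ insert a (S ∪ T) := Finset.subset_insert a (S ∪ T)
    have hprod := ih hB.2 hx.2 hST.2 fun i hi U hU => h.2 i hi U (hU.trans hsub)
    have hratio := h.1 (S ∪ T) hsub (by simp [hST.1, ha])
    calc (∏ j ∈ insert a T, (1 - x j)) * μ.real (⋂ j ∈ S, (B j)ᶜ)
        = (1 - x a) * ((∏ j ∈ T, (1 - x j)) * μ.real (⋂ j ∈ S, (B j)ᶜ)) := by
          rw [Finset.prod_insert ha, mul_assoc]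
      _ ≤ (1 - x a) * μ.real (⋂ j ∈ S ∪ T, (B j)ᶜ) :=
          mul_le_mul_of_nonneg_left hprod (sub_nonneg.mpr hx.1)
      _ ≤ μ.real (⋂ j ∈ insert a (S ∪ T), (B j)ᶜ) := by
          rw [measureReal_biInter_compl_insert hB.1]
          linarith

namespace IsLopsidependency

variable {J : ι → Finset ι}

theorem measureReal_inter_biInter_compl_le [IsFiniteMeasure μ] (hJ : IsLopsidependency μ B J)
    (hB : ∀ i, MeasurableSet (B i)) (hx₀ : ∀ i, 0 ≤ x i) (hx₁ : ∀ i, x i ≤ 1)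
    (hμ : ∀ i, μ.real (B i) ≤ x i * ∏ j ∈ J i, (1 - x j)) {i : ι} {S : Finset ι} (hi : i ∉ S) :
    μ.real (B i ∩ ⋂ j ∈ S, (B j)ᶜ) ≤ x i * μ.real (⋂ j ∈ S, (B j)ᶜ) := by
  induction S using Finset.strongInduction generalizing i with
  | H S ih =>
    have hsplit : S \ J i ∪ S ∩ J i = S := Finset.sdiff_union_inter S (J i)
    have hrestore : (∏ j ∈ S ∩ J i, (1 - x j)) * μ.real (⋂ j ∈ S \ J i, (B j)ᶜ) ≤
        μ.real (⋂ j ∈ S, (B j)ᶜ) := by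
      have h := prod_one_sub_mul_measureReal_biInter_compl_le (μ := μ) (x := x)
        (fun j _ => hB j) (fun j _ => hx₁ j) (Finset.disjoint_sdiff_inter S (J i))
        fun k hk U hU hkU => ih U ((Finset.ssubset_iff_of_subset (hsplit ▸ hU)).mpr
          ⟨k, Finset.mem_of_mem_inter_left hk, hkU⟩) hkU
      rwa [hsplit] at h
    have hprod : ∏ j ∈ J i, (1 - x j) ≤ ∏ j ∈ S ∩ J i, (1 - x j) :=
      Finset.prod_le_prod_of_subset_of_le_one Finset.inter_subset_right
        (fun j _ => sub_nonneg.mpr (hx₁ j)) (fun j _ _ => sub_le_self 1 (hx₀ j))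
    calc μ.real (B i ∩ ⋂ j ∈ S, (B j)ᶜ)
        ≤ μ.real (B i ∩ ⋂ j ∈ S \ J i, (B j)ᶜ) :=
          measureReal_mono (Set.inter_subset_inter_right _
            (Set.biInter_subset_biInter_left Finset.sdiff_subset))
      _ ≤ μ.real (B i) * μ.real (⋂ j ∈ S \ J i, (B j)ᶜ) :=
          hJ i _ (fun h => hi (Finset.sdiff_subset h)) Finset.sdiff_disjoint
      _ ≤ x i * (∏ j ∈ S ∩ J i, (1 - x j)) * μ.real (⋂ j ∈ S \ J i, (B j)ᶜ) := by
          gcongr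
          exact (hμ i).trans (mul_le_mul_of_nonneg_left hprod (hx₀ i))
      _ ≤ x i * μ.real (⋂ j ∈ S, (B j)ᶜ) := by
          rw [mul_assoc]
          exact mul_le_mul_of_nonneg_left hrestore (hx₀ i)

theorem prod_one_sub_le_measureReal_biInter_compl [IsProbabilityMeasure μ]
    (hJ : IsLopsidependency μ B J) (hB : ∀ i, MeasurableSet (B i)) (hx₀ : ∀ i, 0 ≤ x i)
    (hx₁ : ∀ i, x i ≤ 1) (hμ : ∀ i, μ.real (B i) ≤ x i * ∏ j ∈ J i, (1 - x j)) (S : Finset ι) :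
    ∏ j ∈ S, (1 - x j) ≤ μ.real (⋂ j ∈ S, (B j)ᶜ) := by
  simpa using prod_one_sub_mul_measureReal_biInter_compl_le (S := ∅) (T := S) (fun j _ => hB j)
    (fun j _ => hx₁ j) (Finset.disjoint_empty_left S)
    fun _ _ _ _ hi => hJ.measureReal_inter_biInter_compl_le hB hx₀ hx₁ hμ hi

end IsLopsidependency

end LocalLemma

theorem le_inv_mul_one_sub_inv_pow_of_exp_one_mul_le_one {d : ℕ} {p : ℝ}
    (h : Real.exp 1 * p * (d + 1) ≤ 1) :
    p ≤ ((d : ℝ) + 2)⁻¹ * (1 - ((d : ℝ) + 2)⁻¹) ^ d := by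
  have hexp : (1 + ((d : ℝ) + 1)⁻¹) ^ (d + 1) ≤ Real.exp 1 := by
    exact_mod_cast Real.one_add_inv_pow_le_exp (n := d + 1)
  have hbase : 1 - ((d : ℝ) + 2)⁻¹ = (1 + ((d : ℝ) + 1)⁻¹)⁻¹ := by
    field_simp
    ring
  have hfactor : ((d : ℝ) + 2)⁻¹ = (1 + ((d : ℝ) + 1)⁻¹)⁻¹ * ((d : ℝ) + 1)⁻¹ := by
    field_simp
    ring
  calc p ≤ (Real.exp 1)⁻¹ * ((d : ℝ) + 1)⁻¹ := by
        rw [← mul_inv, ← one_div, le_div_iff₀ (by positivity)]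
        linarith
    _ ≤ ((1 + ((d : ℝ) + 1)⁻¹) ^ (d + 1))⁻¹ * ((d : ℝ) + 1)⁻¹ := by gcongr
    _ = ((d : ℝ) + 2)⁻¹ * (1 - ((d : ℝ) + 2)⁻¹) ^ d := by
        rw [hbase, hfactor, ← inv_pow, pow_succ]
        ring

theorem stmt_12_general {Ω ι : Type*} [MeasurableSpace Ω] {μ : Measure Ω} [IsProbabilityMeasure μ]
    {B : ι → Set Ω} (hB : ∀ i, MeasurableSet (B i)) {J : ι → Finset ι}
    (hJ : IsLopsidependency μ B J) {d : ℕ} (hd : ∀ i, (J i).card ≤ d) {p : ℝ}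
    (hp : ∀ i, μ.real (B i) ≤ p) (h : Real.exp 1 * p * (d + 1) ≤ 1) (S : Finset ι) :
    (((d : ℝ) + 1) / (d + 2)) ^ S.card ≤ μ.real (⋂ j ∈ S, (B j)ᶜ) := by
  have hx₁ : ((d : ℝ) + 2)⁻¹ ≤ 1 := inv_le_one_of_one_le₀ (by linarith [d.cast_nonneg (α := ℝ)])
  have hμ : ∀ i, μ.real (B i) ≤ ((d : ℝ) + 2)⁻¹ * ∏ _j ∈ J i, (1 - ((d : ℝ) + 2)⁻¹) := by
    intro i
    rw [Finset.prod_const]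
    refine (hp i).trans ((le_inv_mul_one_sub_inv_pow_of_exp_one_mul_le_one h).trans ?_)
    gcongr ?_ * ?_
    exact pow_le_pow_of_le_one (sub_nonneg.mpr hx₁) (sub_le_self 1 (by positivity)) (hd i)
  have hbase : 1 - ((d : ℝ) + 2)⁻¹ = (d + 1) / (d + 2) := by
    field_simp
    ring
  have hprod := hJ.prod_one_sub_le_measureReal_biInter_compl hB (fun _ => by positivity)
    (fun _ => hx₁) hμ S
  rwa [Finset.prod_const, hbase] at hprod

theorem stmt_12 {Ω : Type} [MeasureSpace Ω]
    [IsProbabilityMeasure (volume : Measure Ω)]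
    (n : ℕ) (B : Fin n → Set Ω) (hB : ∀ i, MeasurableSet (B i))
    (d : ℕ) (p : ℝ)
    -- each `B i` is mutually independent of all but at most `d` of the other events
    (hdep : ∀ i : Fin n, ∃ J : Finset (Fin n), i ∉ J ∧ J.card ≤ d ∧
      MutuallyIndepOf volume (B i) (fun j : {j : Fin n // j ∉ J ∧ j ≠ i} => B j))
    (hp : ∀ i, (volume (B i)).toReal ≤ p)
    (h : Real.exp 1 * p * (d + 1) ≤ 1) :
    0 < (volume (⋂ i, (B i)ᶜ)).toReal := by
  choose J _ hcard hindep using hdep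
  have hbound := stmt_12_general hB (isLopsidependency_of_mutuallyIndepOf hindep) hcard hp h
    Finset.univ
  simp only [Finset.mem_univ, Set.iInter_true] at hbound
  exact lt_of_lt_of_le (by positivity) hbound
end

section
/- Let X be a non-negative random variable, not identically 0, determined by n independent trials T₁,…,T_n. Let r > 0 and let Ω* be a measurable subset of the product space. Suppose that for every outcome x = (x₁,…,x_n) of the trials there exist non-negative reals b₁,…,b_n such that (1) Σ_i b_i² ≤ r·X(x), and (2) for any outcome y, X(y) ≥ X(x) − Σ_{i : x_i ≠ y_i} b_i. Then for any t > 0 and any median Med(X) of X, Pr(|X − Med(X)| > t) ≤ 4·exp(−t²/(4r·(Med(X) + t))) + 4·Pr(Ω*). -/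
open MeasureTheory
open scoped Classical

/-- The product of the `n` probability spaces `Ω i`. -/
noncomputable def prodMeasure {n : ℕ} (Ω : Fin n → Type) [∀ i, MeasureSpace (Ω i)] :
    Measure (∀ i, Ω i) :=
  Measure.pi fun i => (volume : Measure (Ω i))

/-- `m` is a median of the random variable `X`. -/
def IsMedian {n : ℕ} {Ω : Fin n → Type} [∀ i, MeasureSpace (Ω i)]
    (X : (∀ i, Ω i) → ℝ) (m : ℝ) : Prop :=
  (1 : ℝ) / 2 ≤ ((prodMeasure Ω) {x | X x ≤ m}).toReal ∧
  (1 : ℝ) / 2 ≤ ((prodMeasure Ω) {x | m ≤ X x}).toReal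

/-!
Normalising the certificate weights at a point `x` with `X x ≥ u` shows that `x` has convex distance
at least `(u - a) / √(r * u)` from `{X ≤ a}`, so Talagrand's convex distance inequality bounds
`P(X ≥ u) * P(X ≤ a)` off the exceptional set by `exp (-(u - a)² / (4 * r * u))`. Taking one of the
two levels to be the median bounds each tail.

The convex distance inequality is proved in a dual form, in which the convex distance itself, whose
measurability is unclear, does not appear: a pointwise inequality between a function and a weighted
family of functions, stable under passing to sections, implies the corresponding inequality between
the logarithms of their exponential integrals.
-/

open ProbabilityTheory

section ExponentialBounds

lemma exp_sub_sq_add_exp_neg_le_two {d : ℝ} (hd0 : 0 ≤ d) (hd4 : d ≤ 4) :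
    Real.exp (d - d ^ 2) + Real.exp (-d) ≤ 2 := by
  have hsq : (d - d ^ 2 / 2) ^ 2 ≤ d ^ 2 := by
    nlinarith [mul_nonneg (pow_nonneg hd0 3) (sub_nonneg.2 hd4)]
  calc Real.exp (d - d ^ 2) + Real.exp (-d)
      = 2 * (Real.exp (-(d ^ 2 / 2)) * Real.cosh (d - d ^ 2 / 2)) := by
        rw [Real.cosh_eq, mul_div_assoc', mul_div_cancel₀ _ two_ne_zero, mul_add, ← Real.exp_add,
          ← Real.exp_add]
        ring_nf
    _ ≤ 2 * (Real.exp (-(d ^ 2 / 2)) * Real.exp (d ^ 2 / 2)) := by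
        gcongr
        exact (Real.cosh_le_exp_half_sq _).trans (by gcongr)
    _ = 2 := by rw [← Real.exp_add, neg_add_cancel, Real.exp_zero, mul_one]

lemma exists_mul_add_sq_div_four_le_log {d : ℝ} (hd : 0 ≤ d) :
    ∃ l ∈ Set.Icc (0 : ℝ) 1, (1 - l) * d + l ^ 2 / 4 ≤ Real.log (2 - Real.exp (-d)) := by
  have hpos : 0 < 2 - Real.exp (-d) := by linarith [Real.exp_le_one_iff.2 (neg_nonpos.2 hd)]
  simp_rw [Real.le_log_iff_exp_le hpos]
  rcases le_total d (1 / 2) with hsmall | hlarge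
  · refine ⟨2 * d, ⟨by linarith, by linarith⟩, ?_⟩
    rw [show (1 - 2 * d) * d + (2 * d) ^ 2 / 4 = d - d ^ 2 by ring]
    linarith [exp_sub_sq_add_exp_neg_le_two hd (by linarith)]
  · refine ⟨1, ⟨zero_le_one, le_rfl⟩, ?_⟩
    have hhalf := exp_sub_sq_add_exp_neg_le_two (d := 1 / 2) (by norm_num) (by norm_num)
    have hmono : Real.exp (-d) ≤ Real.exp (-(1 / 2)) := Real.exp_le_exp.2 (by linarith)
    rw [show (1 - 1) * d + 1 ^ 2 / 4 = 1 / 2 - (1 / 2 : ℝ) ^ 2 by ring]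
    linarith

end ExponentialBounds

section CumulantGeneratingFunction

variable {E E' ι : Type*} [MeasurableSpace E] [MeasurableSpace E'] [Fintype ι]
  {μ : Measure E} {ν : Measure E'}

lemma integrable_exp_of_bddAbove [IsFiniteMeasure μ] {f : E → ℝ} (hf : Measurable f)
    (hbdd : BddAbove (Set.range f)) : Integrable (fun x => Real.exp (f x)) μ := by
  obtain ⟨C, hC⟩ := hbdd
  simpa only [one_mul] using integrable_exp_mul_of_le 1 C zero_le_one hf.aemeasurable
    (ae_of_all _ fun x => hC ⟨x, rfl⟩)

lemma exp_cgf_one [NeZero μ] {f : E → ℝ} (hf : Integrable (fun x => Real.exp (f x)) μ) :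
    Real.exp (cgf f μ 1) = ∫ x, Real.exp (f x) ∂μ := by
  simpa only [one_mul, mgf] using exp_cgf (t := 1) (by simpa only [one_mul] using hf)

lemma cgf_one_le_of_forall_le [IsProbabilityMeasure μ] {f : E → ℝ} {C : ℝ} (hf : Measurable f)
    (hC : ∀ x, f x ≤ C) : cgf f μ 1 ≤ C := by
  have hint : Integrable (fun x => Real.exp (f x)) μ :=
    integrable_exp_of_bddAbove hf ⟨C, Set.forall_mem_range.2 hC⟩
  rw [← Real.exp_le_exp, exp_cgf_one hint]
  calc ∫ x, Real.exp (f x) ∂μ ≤ ∫ _, Real.exp C ∂μ :=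
        integral_mono hint (integrable_const _) fun x => Real.exp_le_exp.2 (hC x)
    _ = Real.exp C := by rw [integral_const, probReal_univ, one_smul]

lemma integral_exp_sub_cgf_one [NeZero μ] {f : E → ℝ}
    (hf : Integrable (fun x => Real.exp (f x)) μ) :
    ∫ x, Real.exp (f x - cgf f μ 1) ∂μ = 1 := by
  simp_rw [Real.exp_sub]
  rw [integral_div, ← exp_cgf_one hf, div_self (Real.exp_ne_zero _)]

-- Jensen's inequality for `exp`, applied to the functions `f k - cgf (f k) μ 1`,
-- whose exponentials have integral one.
lemma cgf_one_le_add_sum_mul_cgf [NeZero μ] {w : ι → ℝ} (hw : w ∈ stdSimplex ℝ ι)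
    {g : E → ℝ} {f : ι → E → ℝ} {c : ℝ} (hg : Integrable (fun x => Real.exp (g x)) μ)
    (hf : ∀ k, Integrable (fun x => Real.exp (f k x)) μ)
    (hgf : ∀ x, g x ≤ c + ∑ k, w k * f k x) :
    cgf g μ 1 ≤ c + ∑ k, w k * cgf (f k) μ 1 := by
  set C := c + ∑ k, w k * cgf (f k) μ 1 with hC
  have hnorm (k : ι) : Integrable (fun x => Real.exp (f k x - cgf (f k) μ 1)) μ := by
    simpa only [Real.exp_sub] using (hf k).div_const _
  have hsum : Integrable (fun x => ∑ k, w k * Real.exp (f k x - cgf (f k) μ 1)) μ :=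
    integrable_finsetSum _ fun k _ => (hnorm k).const_mul _
  have hjensen (x : E) : Real.exp (g x) ≤
      Real.exp C * ∑ k, w k * Real.exp (f k x - cgf (f k) μ 1) := by
    calc Real.exp (g x) ≤ Real.exp (C + ∑ k, w k * (f k x - cgf (f k) μ 1)) := by
          refine Real.exp_le_exp.2 ((hgf x).trans_eq ?_)
          simp only [hC, mul_sub, Finset.sum_sub_distrib]
          ring
      _ = Real.exp C * Real.exp (∑ k, w k • (f k x - cgf (f k) μ 1)) := Real.exp_add _ _
      _ ≤ Real.exp C * ∑ k, w k * Real.exp (f k x - cgf (f k) μ 1) := by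
          gcongr
          exact convexOn_exp.map_sum_le (fun k _ => hw.1 k) hw.2 fun _ _ => Set.mem_univ _
  rw [← Real.exp_le_exp, exp_cgf_one hg]
  calc ∫ x, Real.exp (g x) ∂μ
      ≤ ∫ x, Real.exp C * ∑ k, w k * Real.exp (f k x - cgf (f k) μ 1) ∂μ :=
        integral_mono hg (hsum.const_mul _) hjensen
    _ = Real.exp C * ∑ k, w k := by
        rw [integral_const_mul, integral_finsetSum _ fun k _ => (hnorm k).const_mul _]
        simp_rw [integral_const_mul, integral_exp_sub_cgf_one (hf _), mul_one]
    _ = Real.exp C := by rw [hw.2, mul_one]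

lemma cgf_sub_const_one [IsProbabilityMeasure μ] {f : E → ℝ}
    (hf : Integrable (fun x => Real.exp (f x)) μ) (C : ℝ) :
    cgf (fun x => f x - C) μ 1 = cgf f μ 1 - C := by
  have hsub : Integrable (fun x => Real.exp (f x - C)) μ := by
    simpa only [Real.exp_sub] using hf.div_const _
  rw [← Real.exp_eq_exp, exp_cgf_one hsub, Real.exp_sub, exp_cgf_one hf, ← integral_div]
  simp_rw [Real.exp_sub]

lemma cgf_log_two_sub_exp_add_cgf_nonpos [IsProbabilityMeasure μ] {f : E → ℝ} (hf : Measurable f)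
    (hf0 : ∀ x, f x ≤ 0) :
    cgf (fun x => Real.log (2 - Real.exp (f x))) μ 1 + cgf f μ 1 ≤ 0 := by
  have hint : Integrable (fun x => Real.exp (f x)) μ :=
    integrable_exp_of_bddAbove hf ⟨0, Set.forall_mem_range.2 hf0⟩
  have hexp_log (x : E) : Real.exp (Real.log (2 - Real.exp (f x))) = 2 - Real.exp (f x) :=
    Real.exp_log (by linarith [Real.exp_le_one_iff.2 (hf0 x)])
  have hmgf_pos : 0 < ∫ x, Real.exp (f x) ∂μ := integral_exp_pos hint
  have hmgf_le : ∫ x, Real.exp (f x) ∂μ ≤ 1 := by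
    rw [← exp_cgf_one hint, Real.exp_le_one_iff]
    exact cgf_one_le_of_forall_le hf hf0
  have hintegral : ∫ x, (2 - Real.exp (f x)) ∂μ = 2 - ∫ x, Real.exp (f x) ∂μ := by
    rw [integral_sub (integrable_const _) hint, integral_const, probReal_univ, one_smul]
  simp only [cgf, mgf, one_mul, hexp_log, hintegral]
  linarith [Real.log_le_sub_one_of_pos hmgf_pos,
    Real.log_le_sub_one_of_pos (show 0 < 2 - ∫ x, Real.exp (f x) ∂μ by linarith)]

-- Choosing `l k` optimally at each `x` bounds `g` by a constant plus the `w`-average of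
-- `log (2 - exp (h k - s k))`, whose `cgf` is controlled by that of `h k`.
lemma cgf_add_sum_mul_cgf_le_of_interpolation [IsProbabilityMeasure μ] {w : ι → ℝ}
    (hw : w ∈ stdSimplex ℝ ι) {g : E → ℝ} {h : ι → E → ℝ} {s : ι → ℝ} {c : ℝ}
    (hg : Integrable (fun x => Real.exp (g x)) μ) (hh : ∀ k, Measurable (h k))
    (hs : ∀ k x, h k x ≤ s k)
    (hint : ∀ x (l : ι → ℝ), (∀ k, l k ∈ Set.Icc 0 1) →
      g x + ∑ k, w k * ((1 - l k) * h k x + l k * s k) ≤ c + ∑ k, w k * (l k ^ 2 / 4)) :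
    cgf g μ 1 + ∑ k, w k * cgf (h k) μ 1 ≤ c := by
  let φ : ι → E → ℝ := fun k x => Real.log (2 - Real.exp (h k x - s k))
  have hexp_pos (k : ι) (x : E) : 1 ≤ 2 - Real.exp (h k x - s k) := by
    linarith [Real.exp_le_one_iff.2 (sub_nonpos.2 (hs k x))]
  have hφ_int (k : ι) : Integrable (fun x => Real.exp (φ k x)) μ := by
    have hh' := hh k
    refine integrable_exp_of_bddAbove (by fun_prop) ⟨Real.log 2, Set.forall_mem_range.2 fun x => ?_⟩
    exact Real.log_le_log (by linarith [hexp_pos k x]) (by linarith [Real.exp_pos (h k x - s k)])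
  have hgφ (x : E) : g x ≤ (c - ∑ k, w k * s k) + ∑ k, w k * φ k x := by
    choose l hl hlφ using fun k => exists_mul_add_sq_div_four_le_log (sub_nonneg.2 (hs k x))
    have hsum : ∑ k, w k * ((1 - l k) * (s k - h k x) + l k ^ 2 / 4) ≤ ∑ k, w k * φ k x := by
      refine Finset.sum_le_sum fun k _ => mul_le_mul_of_nonneg_left ?_ (hw.1 k)
      simpa only [neg_sub] using hlφ k
    have hsplit : ∑ k, w k * ((1 - l k) * (s k - h k x) + l k ^ 2 / 4) =
        ∑ k, w k * s k - ∑ k, w k * ((1 - l k) * h k x + l k * s k) +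
          ∑ k, w k * (l k ^ 2 / 4) := by
      rw [← Finset.sum_sub_distrib, ← Finset.sum_add_distrib]
      exact Finset.sum_congr rfl fun k _ => by ring
    linarith [hint x l hl]
  have hcgf (k : ι) : cgf (φ k) μ 1 ≤ s k - cgf (h k) μ 1 := by
    have hle := cgf_log_two_sub_exp_add_cgf_nonpos (μ := μ) ((hh k).sub_const (s k))
      fun x => sub_nonpos.2 (hs k x)
    rw [cgf_sub_const_one (integrable_exp_of_bddAbove (hh k)
      ⟨s k, Set.forall_mem_range.2 (hs k)⟩)] at hle
    linarith
  have hsum_cgf : ∑ k, w k * cgf (φ k) μ 1 ≤ ∑ k, w k * s k - ∑ k, w k * cgf (h k) μ 1 := by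
    rw [← Finset.sum_sub_distrib]
    refine Finset.sum_le_sum fun k _ => ?_
    rw [← mul_sub]
    exact mul_le_mul_of_nonneg_left (hcgf k) (hw.1 k)
  linarith [cgf_one_le_add_sum_mul_cgf hw hg hφ_int hgφ]

lemma cgf_prod [SFinite μ] [SFinite ν] [NeZero ν] {f : E × E' → ℝ}
    (hf : Integrable (fun p => Real.exp (f p)) (μ.prod ν)) :
    cgf f (μ.prod ν) 1 = cgf (fun x => cgf (fun y => f (x, y)) ν 1) μ 1 := by
  simp only [cgf, mgf, one_mul]
  rw [integral_prod _ hf]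
  congr 1
  refine integral_congr_ae ?_
  filter_upwards [hf.prod_right_ae] with x hx
  simpa only [cgf, mgf, one_mul] using (exp_cgf_one hx).symm

lemma measurable_cgf_prodMk_left [SFinite ν] {f : E × E' → ℝ} (hf : Measurable f) (t : ℝ) :
    Measurable fun x => cgf (fun y => f (x, y)) ν t := by
  have hexp : StronglyMeasurable fun p => Real.exp (t * f p) :=
    (Real.measurable_exp.comp (hf.const_mul t)).stronglyMeasurable
  exact Real.measurable_log.comp hexp.integral_prod_right'.measurable

end CumulantGeneratingFunction

lemma sum_mul_iSup_le {E ι : Type*} [Nonempty E] [Fintype ι] {v : ι → ℝ} {h : ι → E → ℝ} {C : ℝ}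
    (hbdd : ∀ k, BddAbove (Set.range (h k))) (hle : ∀ z : ι → E, ∑ k, v k * h k (z k) ≤ C) :
    ∑ k, v k * ⨆ x, h k x ≤ C := by
  have hmem : (fun k => ⨆ x, h k x) ∈ closure (Set.univ.pi fun k => Set.range (h k)) := by
    rw [closure_pi_set]
    exact fun k _ => csSup_mem_closure (Set.range_nonempty _) (hbdd k)
  have hclosed : IsClosed {u : ι → ℝ | ∑ k, v k * u k ≤ C} :=
    isClosed_le (by fun_prop) continuous_const
  refine hclosed.closure_subset_iff.2 (fun u hu => ?_) hmem
  choose z hz using fun k => hu k (Set.mem_univ k)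
  simpa only [Set.mem_ofPred_eq, hz] using hle z

section FinCons

variable {n : ℕ} {Ω : Fin (n + 1) → Type*} [∀ i, MeasurableSpace (Ω i)] (μ : ∀ i, Measure (Ω i))
  {f : (∀ i, Ω i) → ℝ}

lemma measurable_finCons_right (x : Ω 0) :
    Measurable fun y : ∀ i : Fin n, Ω i.succ => (Fin.cons x y : ∀ i, Ω i) :=
  measurable_pi_iff.2 <| Fin.cases measurable_const fun i => measurable_pi_apply i

/-- The logarithm of the integral of `exp ∘ f` over all coordinates but the first, as a function
of the first coordinate. -/
noncomputable def sectionCgf (f : (∀ i, Ω i) → ℝ) (x : Ω 0) : ℝ :=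
  cgf (fun y => f (Fin.cons x y)) (Measure.pi fun i : Fin n => μ i.succ) 1

variable [∀ i, IsProbabilityMeasure (μ i)]

lemma measurePreserving_finCons :
    MeasurePreserving (fun p : Ω 0 × (∀ i : Fin n, Ω i.succ) => (Fin.cons p.1 p.2 : ∀ i, Ω i))
      ((μ 0).prod (Measure.pi fun i : Fin n => μ i.succ)) (Measure.pi μ) := by
  have hinsert : (fun p : Ω 0 × (∀ i : Fin n, Ω i.succ) => (Fin.cons p.1 p.2 : ∀ i, Ω i)) =
      (MeasurableEquiv.piFinSuccAbove Ω 0).symm :=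
    funext fun p => (Fin.insertNth_zero p.1 p.2).symm
  rw [hinsert]
  exact (measurePreserving_piFinSuccAbove μ 0).symm

lemma cgf_pi_succ (hf : Measurable f) (hbdd : BddAbove (Set.range f)) :
    cgf f (Measure.pi μ) 1 = cgf (sectionCgf μ f) (μ 0) 1 := by
  have hcons := measurePreserving_finCons μ
  rw [cgf, ← hcons.map_eq, mgf_map hcons.measurable.aemeasurable
    (Real.measurable_exp.comp (hf.const_mul 1)).aestronglyMeasurable]
  exact cgf_prod (integrable_exp_of_bddAbove (hf.comp hcons.measurable)
    (hbdd.mono (Set.range_comp_subset_range _ f)))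

lemma measurable_sectionCgf (hf : Measurable f) : Measurable (sectionCgf μ f) :=
  measurable_cgf_prodMk_left (hf.comp (measurePreserving_finCons μ).measurable) 1

lemma bddAbove_range_sectionCgf (hf : Measurable f) (hbdd : BddAbove (Set.range f)) :
    BddAbove (Set.range (sectionCgf μ f)) := by
  obtain ⟨C, hC⟩ := hbdd
  exact ⟨C, Set.forall_mem_range.2 fun x =>
    cgf_one_le_of_forall_le (hf.comp (measurable_finCons_right x)) fun y => hC ⟨_, rfl⟩⟩

end FinCons

section WeightedHammingDist

variable {ι : Type*} [Fintype ι] {Ω : ι → Type*}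

/-- The weighted Hamming distance: the total weight `b` of the coordinates in which `x` and `y`
differ. -/
noncomputable def weightedHammingDist (b : ι → ℝ) (x y : ∀ i, Ω i) : ℝ :=
  ∑ i with x i ≠ y i, b i

lemma weightedHammingDist_nonneg {b : ι → ℝ} (hb : ∀ i, 0 ≤ b i) (x y : ∀ i, Ω i) :
    0 ≤ weightedHammingDist b x y :=
  Finset.sum_nonneg fun i _ => hb i

lemma weightedHammingDist_const_mul (a : ℝ) (b : ι → ℝ) (x y : ∀ i, Ω i) :
    weightedHammingDist (fun i => a * b i) x y = a * weightedHammingDist b x y :=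
  (Finset.mul_sum _ _ _).symm

lemma weightedHammingDist_comp_equiv {κ : Type*} [Fintype κ] (e : κ ≃ ι) (b : ι → ℝ)
    (x y : ∀ i, Ω i) :
    weightedHammingDist (fun j => b (e j)) (fun j => x (e j)) (fun j => y (e j)) =
      weightedHammingDist b x y := by
  simp only [weightedHammingDist, Finset.sum_filter]
  exact e.sum_comp fun i => if x i ≠ y i then b i else 0

lemma weightedHammingDist_cons {n : ℕ} {Ω : Fin (n + 1) → Type*} (b : Fin (n + 1) → ℝ)
    (x₀ y₀ : Ω 0) (x y : ∀ i : Fin n, Ω i.succ) :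
    weightedHammingDist b (Fin.cons x₀ x) (Fin.cons y₀ y) =
      (if x₀ ≠ y₀ then b 0 else 0) + weightedHammingDist (fun i : Fin n => b i.succ) x y := by
  simp only [weightedHammingDist, Finset.sum_filter, Fin.sum_univ_succ, Fin.cons_zero,
    Fin.cons_succ]

end WeightedHammingDist

/-- Dual form of a lower bound on Talagrand's convex distance: at every point `x`, the value `g x`,
the `w`-average of levels `B k` for which `h k` grows at most like `B k` plus a weighted Hamming
distance from `x`, and the squared norm of the weights sum to at most `c`. The weights `b` are the
same for all `k`. -/
def TalagrandDominated {ι κ : Type*} [Fintype ι] [Fintype κ] {Ω : κ → Type*} (w : ι → ℝ)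
    (g : (∀ i, Ω i) → ℝ) (h : ι → (∀ i, Ω i) → ℝ) (c : ℝ) : Prop :=
  ∀ x, ∃ (b : κ → ℝ) (B : ι → ℝ), (∀ i, 0 ≤ b i) ∧
    (∀ k y, h k y ≤ B k + weightedHammingDist b x y) ∧
    g x + ∑ k, w k * B k + ∑ i, b i ^ 2 ≤ c

lemma sumElim_mul_mem_stdSimplex {ι : Type*} [Fintype ι] {w l : ι → ℝ} (hw : w ∈ stdSimplex ℝ ι)
    (hl : ∀ k, l k ∈ Set.Icc 0 1) :
    Sum.elim (fun k => w k * (1 - l k)) (fun k => w k * l k) ∈ stdSimplex ℝ (ι ⊕ ι) := by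
  refine ⟨Sum.forall.2 ⟨fun k => mul_nonneg (hw.1 k) (sub_nonneg.2 (hl k).2),
    fun k => mul_nonneg (hw.1 k) (hl k).1⟩, ?_⟩
  simp only [Fintype.sum_sum_type, Sum.elim_inl, Sum.elim_inr, ← Finset.sum_add_distrib,
    ← mul_add, sub_add_cancel, mul_one, hw.2]

namespace TalagrandDominated

-- The section through `z k` costs an extra `b 0`; weighted by `w k * l k`, this is absorbed into
-- `b 0 ^ 2` by AM-GM, `l k * b 0 ≤ l k ^ 2 / 4 + b 0 ^ 2`.
lemma cons {ι : Type*} [Fintype ι] {n : ℕ} {Ω : Fin (n + 1) → Type*} {w : ι → ℝ}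
    {g : (∀ i, Ω i) → ℝ} {h : ι → (∀ i, Ω i) → ℝ} {c : ℝ} (hw : w ∈ stdSimplex ℝ ι)
    (hgh : TalagrandDominated w g h c) (l : ι → ℝ) (x : Ω 0) (z : ι → Ω 0) :
    TalagrandDominated (Sum.elim (fun k => w k * (1 - l k)) (fun k => w k * l k))
      (fun y : ∀ i : Fin n, Ω i.succ => g (Fin.cons x y))
      (Sum.elim (fun k y => h k (Fin.cons x y)) (fun k y => h k (Fin.cons (z k) y)))
      (c + ∑ k, w k * (l k ^ 2 / 4)) := by
  intro x'
  obtain ⟨b, B, hb, hB, hc⟩ := hgh (Fin.cons x x')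
  refine ⟨fun i => b i.succ, Sum.elim B fun k => B k + b 0, fun i => hb _,
    Sum.forall.2 ⟨fun k y => ?_, fun k y => ?_⟩, ?_⟩
  · simpa only [weightedHammingDist_cons, ne_eq, not_true_eq_false, if_false, zero_add,
      Sum.elim_inl] using hB k (Fin.cons x y)
  · have hstep : (if x ≠ z k then b 0 else 0) ≤ b 0 := by split_ifs <;> simp [hb 0]
    have hle := hB k (Fin.cons (z k) y)
    rw [weightedHammingDist_cons] at hle
    simp only [Sum.elim_inr]
    linarith
  · have hamgm : ∑ k, w k * (l k * b 0) ≤ ∑ k, w k * (l k ^ 2 / 4) + b 0 ^ 2 := by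
      calc ∑ k, w k * (l k * b 0) ≤ ∑ k, (w k * (l k ^ 2 / 4) + w k * b 0 ^ 2) :=
            Finset.sum_le_sum fun k _ => by
              rw [← mul_add]
              exact mul_le_mul_of_nonneg_left (by nlinarith [sq_nonneg (l k / 2 - b 0)]) (hw.1 k)
        _ = ∑ k, w k * (l k ^ 2 / 4) + b 0 ^ 2 := by
            rw [Finset.sum_add_distrib, ← Finset.sum_mul, hw.2, one_mul]
    have hsplit : ∑ k, w k * (1 - l k) * B k + ∑ k, w k * l k * (B k + b 0) =
        ∑ k, w k * B k + ∑ k, w k * (l k * b 0) := by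
      simp only [← Finset.sum_add_distrib]
      exact Finset.sum_congr rfl fun k _ => by ring
    rw [Fin.sum_univ_succ] at hc
    simp only [Fintype.sum_sum_type, Sum.elim_inl, Sum.elim_inr]
    linarith

lemma cgf_add_sum_mul_cgf_le_of_isEmpty {ι κ : Type*} [Fintype ι] [Fintype κ] [IsEmpty κ]
    {Ω : κ → Type*} [∀ i, MeasurableSpace (Ω i)] (μ : Measure (∀ i, Ω i)) [IsProbabilityMeasure μ]
    {w : ι → ℝ} {g : (∀ i, Ω i) → ℝ} {h : ι → (∀ i, Ω i) → ℝ} {c : ℝ} (hw : ∀ k, 0 ≤ w k)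
    (hgh : TalagrandDominated w g h c) :
    cgf g μ 1 + ∑ k, w k * cgf (h k) μ 1 ≤ c := by
  have hcgf (f : (∀ i, Ω i) → ℝ) : cgf f μ 1 = f default := by
    rw [show f = fun _ => f default from funext fun x => congrArg f (Subsingleton.elim _ _),
      cgf_const, one_mul]
  obtain ⟨b, B, -, hB, hc⟩ := hgh default
  have hhB : ∑ k, w k * h k default ≤ ∑ k, w k * B k :=
    Finset.sum_le_sum fun k _ => mul_le_mul_of_nonneg_left
      (by simpa only [weightedHammingDist, Finset.univ_eq_empty, Finset.filter_empty,
        Finset.sum_empty, add_zero] using hB k default) (hw k)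
  simp only [hcgf]
  linarith [Finset.sum_nonneg fun i (_ : i ∈ Finset.univ) => sq_nonneg (b i)]

-- Averaging over sections through finitely many points `z k`, instead of taking the infimum over
-- all sections, keeps every function in the induction measurable.
theorem cgf_add_sum_mul_cgf_le {ι : Type*} [Fintype ι] {n : ℕ} {Ω : Fin n → Type*}
    [∀ i, MeasurableSpace (Ω i)] (μ : ∀ i, Measure (Ω i)) [∀ i, IsProbabilityMeasure (μ i)]
    {w : ι → ℝ} {g : (∀ i, Ω i) → ℝ} {h : ι → (∀ i, Ω i) → ℝ} {c : ℝ}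
    (hw : w ∈ stdSimplex ℝ ι) (hg : Measurable g) (hg_bdd : BddAbove (Set.range g))
    (hh : ∀ k, Measurable (h k)) (hh_bdd : ∀ k, BddAbove (Set.range (h k)))
    (hgh : TalagrandDominated w g h c) :
    cgf g (Measure.pi μ) 1 + ∑ k, w k * cgf (h k) (Measure.pi μ) 1 ≤ c := by
  induction n generalizing ι c with
  | zero => exact hgh.cgf_add_sum_mul_cgf_le_of_isEmpty _ hw.1
  | succ n ih =>
    have : Nonempty (Ω 0) := nonempty_of_isProbabilityMeasure (μ 0)
    have hcons {f : (∀ i, Ω i) → ℝ} (hf : Measurable f) (x : Ω 0) :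
        Measurable fun y : ∀ i : Fin n, Ω i.succ => f (Fin.cons x y) :=
      hf.comp (measurable_finCons_right x)
    have hcons_bdd {f : (∀ i, Ω i) → ℝ} (hf : BddAbove (Set.range f)) (x : Ω 0) :
        BddAbove (Set.range fun y : ∀ i : Fin n, Ω i.succ => f (Fin.cons x y)) :=
      hf.mono (Set.range_comp_subset_range (Fin.cons x) f)
    have hsections (x : Ω 0) (l : ι → ℝ) (hl : ∀ k, l k ∈ Set.Icc 0 1) (z : ι → Ω 0) :
        sectionCgf μ g x + (∑ k, w k * (1 - l k) * sectionCgf μ (h k) x +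
          ∑ k, w k * l k * sectionCgf μ (h k) (z k)) ≤ c + ∑ k, w k * (l k ^ 2 / 4) := by
      simpa only [sectionCgf, Fintype.sum_sum_type, Sum.elim_inl, Sum.elim_inr] using
        ih (fun i => μ i.succ) (sumElim_mul_mem_stdSimplex hw hl) (hcons hg x) (hcons_bdd hg_bdd x)
          (Sum.forall.2 ⟨fun k => hcons (hh k) x, fun k => hcons (hh k) (z k)⟩)
          (Sum.forall.2 ⟨fun k => hcons_bdd (hh_bdd k) x, fun k => hcons_bdd (hh_bdd k) (z k)⟩)
          (hgh.cons hw l x z)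
    have hh_section_bdd (k : ι) := bddAbove_range_sectionCgf μ (hh k) (hh_bdd k)
    simp only [cgf_pi_succ μ hg hg_bdd, fun k => cgf_pi_succ μ (hh k) (hh_bdd k)]
    refine cgf_add_sum_mul_cgf_le_of_interpolation hw
      (integrable_exp_of_bddAbove (measurable_sectionCgf μ hg)
        (bddAbove_range_sectionCgf μ hg hg_bdd))
      (fun k => measurable_sectionCgf μ (hh k)) (fun k x => le_ciSup (hh_section_bdd k) x)
      fun x l hl => ?_
    have hsup := sum_mul_iSup_le hh_section_bdd
      fun z => le_sub_iff_add_le'.2 (le_sub_iff_add_le'.2 (hsections x l hl z))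
    simp only [mul_add, Finset.sum_add_distrib, ← mul_assoc]
    linarith

end TalagrandDominated

section ConvexDistance

lemma talagrandDominated_indicator {κ : Type*} [Fintype κ] {Ω : κ → Type*} {A S : Set (∀ i, Ω i)}
    {s : ℝ} (hs : 0 ≤ s)
    (hdist : ∀ x ∈ A, ∃ b : κ → ℝ, (∀ i, 0 ≤ b i) ∧ ∑ i, b i ^ 2 ≤ 1 ∧
      ∀ y ∈ S, s ≤ weightedHammingDist b x y) :
    TalagrandDominated (fun _ : Unit => 1) (A.indicator fun _ => s ^ 2 / 4)
      (fun _ => Sᶜ.indicator fun _ => -(s ^ 2 / 2)) 0 := by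
  intro x
  by_cases hx : x ∈ A
  · obtain ⟨b, hb, hb1, hbS⟩ := hdist x hx
    refine ⟨fun i => s / 2 * b i, fun _ => -(s ^ 2 / 2), fun i => by have := hb i; positivity,
      fun _ y => ?_, ?_⟩
    · rw [weightedHammingDist_const_mul]
      by_cases hy : y ∈ S
      · simp only [Set.indicator_of_notMem (Set.notMem_compl_iff.2 hy)]
        nlinarith [hbS y hy]
      · simp only [Set.indicator_of_mem (Set.mem_compl hy)]
        nlinarith [weightedHammingDist_nonneg hb x y]
    · simp only [Set.indicator_of_mem hx, Finset.univ_unique, Finset.sum_singleton, one_mul,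
        mul_pow, ← Finset.mul_sum]
      nlinarith [sq_nonneg s]
  · have hS (y : ∀ i, Ω i) : Sᶜ.indicator (fun _ => -(s ^ 2 / 2)) y ≤ 0 :=
      Set.indicator_apply_nonpos fun _ => by nlinarith
    exact ⟨0, 0, fun _ => le_rfl, fun _ y => by simpa [weightedHammingDist] using hS y,
      by simp [hx]⟩

lemma talagrand_convexDistance_fin {n : ℕ} {Ω : Fin n → Type*} [∀ i, MeasurableSpace (Ω i)]
    (μ : ∀ i, Measure (Ω i)) [∀ i, IsProbabilityMeasure (μ i)] {A S : Set (∀ i, Ω i)}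
    (hA : MeasurableSet A) (hS : MeasurableSet S) {s : ℝ} (hs : 0 ≤ s)
    (hdist : ∀ x ∈ A, ∃ b : Fin n → ℝ, (∀ i, 0 ≤ b i) ∧ ∑ i, b i ^ 2 ≤ 1 ∧
      ∀ y ∈ S, s ≤ weightedHammingDist b x y) :
    (Measure.pi μ).real A * (Measure.pi μ).real S ≤ Real.exp (-s ^ 2 / 4) := by
  set g : (∀ i, Ω i) → ℝ := A.indicator fun _ => s ^ 2 / 4
  set h : (∀ i, Ω i) → ℝ := Sᶜ.indicator fun _ => -(s ^ 2 / 2)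
  have hg : Measurable g := measurable_const.indicator hA
  have hh : Measurable h := measurable_const.indicator hS.compl
  have hg_bdd : BddAbove (Set.range g) :=
    ⟨s ^ 2 / 4, Set.forall_mem_range.2 (Set.indicator_le_self' fun _ _ => by positivity)⟩
  have hh_bdd : BddAbove (Set.range h) :=
    ⟨0, Set.forall_mem_range.2 fun _ => Set.indicator_apply_nonpos fun _ => by nlinarith⟩
  have hcgf : cgf g (Measure.pi μ) 1 + cgf h (Measure.pi μ) 1 ≤ 0 := by
    simpa using (talagrandDominated_indicator hs hdist).cgf_add_sum_mul_cgf_le μ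
      (by simp [stdSimplex]) hg hg_bdd (fun _ => hh) fun _ => hh_bdd
  have hchernoff {f : (∀ i, Ω i) → ℝ} (hf : Measurable f) (hbdd : BddAbove (Set.range f)) {v : ℝ}
      {B : Set (∀ i, Ω i)} (hB : ∀ x ∈ B, v ≤ f x) :
      (Measure.pi μ).real B ≤ Real.exp (-1 * v + cgf f (Measure.pi μ) 1) :=
    (measureReal_mono hB).trans <| measure_ge_le_exp_cgf v zero_le_one <| by
      simpa only [one_mul] using integrable_exp_of_bddAbove hf hbdd
  calc (Measure.pi μ).real A * (Measure.pi μ).real S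
      ≤ Real.exp (-1 * (s ^ 2 / 4) + cgf g (Measure.pi μ) 1) *
          Real.exp (-1 * 0 + cgf h (Measure.pi μ) 1) := by
        gcongr
        · exact hchernoff hg hg_bdd fun x hx => (Set.indicator_of_mem hx fun _ => s ^ 2 / 4).ge
        · exact hchernoff hh hh_bdd fun x hx =>
            (Set.indicator_of_notMem (Set.notMem_compl_iff.2 hx) fun _ => -(s ^ 2 / 2)).ge
    _ ≤ Real.exp (-s ^ 2 / 4) := by
        rw [← Real.exp_add]
        exact Real.exp_le_exp.2 (by linarith)

theorem talagrand_convexDistance {ι : Type*} [Fintype ι] {Ω : ι → Type*}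
    [∀ i, MeasurableSpace (Ω i)] (μ : ∀ i, Measure (Ω i)) [∀ i, IsProbabilityMeasure (μ i)]
    {A S : Set (∀ i, Ω i)} (hA : MeasurableSet A) (hS : MeasurableSet S) {s : ℝ} (hs : 0 ≤ s)
    (hdist : ∀ x ∈ A, ∃ b : ι → ℝ, (∀ i, 0 ≤ b i) ∧ ∑ i, b i ^ 2 ≤ 1 ∧
      ∀ y ∈ S, s ≤ weightedHammingDist b x y) :
    (Measure.pi μ).real A * (Measure.pi μ).real S ≤ Real.exp (-s ^ 2 / 4) := by
  let e : Fin (Fintype.card ι) ≃ ι := (Fintype.equivFin ι).symm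
  let φ : (∀ j, Ω (e j)) ≃ᵐ ∀ i, Ω i := MeasurableEquiv.piCongrLeft Ω e
  have hφ : MeasurePreserving φ (Measure.pi fun j => μ (e j)) (Measure.pi μ) :=
    measurePreserving_piCongrLeft μ e
  have hφ_apply (x : ∀ j, Ω (e j)) : (fun j => φ x (e j)) = x :=
    funext fun j => Equiv.piCongrLeft_apply_apply Ω e x j
  rw [← hφ.measureReal_preimage hA.nullMeasurableSet,
    ← hφ.measureReal_preimage hS.nullMeasurableSet]
  refine talagrand_convexDistance_fin _ (φ.measurable hA) (φ.measurable hS) hs fun x hx => ?_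
  obtain ⟨b, hb, hb1, hbS⟩ := hdist (φ x) hx
  refine ⟨fun j => b (e j), fun j => hb _, (e.sum_comp fun i => b i ^ 2).trans_le hb1,
    fun y hy => ?_⟩
  simpa only [← weightedHammingDist_comp_equiv e, hφ_apply] using hbS (φ y) hy

end ConvexDistance

lemma sub_div_sqrt_mul_le_sub_div_sqrt_mul {a u v r : ℝ} (ha : 0 ≤ a) (hau : a < u) (huv : u ≤ v)
    (hr : 0 < r) : (u - a) / √(r * u) ≤ (v - a) / √(r * v) := by
  have hu : 0 < u := ha.trans_lt hau
  have hv : 0 < v := hu.trans_le huv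
  have hsq : (u - a) ^ 2 * v ≤ (v - a) ^ 2 * u := by
    nlinarith [mul_nonneg (sub_nonneg.2 huv)
      (sub_nonneg.2 (mul_le_mul hau.le (hau.le.trans huv) ha hu.le))]
  rw [div_le_div_iff₀ (by positivity) (by positivity),
    ← sq_le_sq₀ (mul_nonneg (by linarith) (by positivity))
      (mul_nonneg (by linarith) (by positivity)), mul_pow, mul_pow,
    Real.sq_sqrt (by positivity), Real.sq_sqrt (by positivity)]
  linarith [mul_le_mul_of_nonneg_left hsq hr.le]

section DownwardCertificates

variable {ι : Type*} [Fintype ι] {Ω : ι → Type*}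

/-- `X` has downward certificates of rate `r` off the exceptional set `N`: at every `x ∉ N` there
are nonnegative weights with squared norm at most `r * X x`, such that `X` drops by at most the
weighted Hamming distance when passing from `x` to any other point off `N`. -/
def HasDownwardCertificates (X : (∀ i, Ω i) → ℝ) (r : ℝ) (N : Set (∀ i, Ω i)) : Prop :=
  ∀ x ∉ N, ∃ b : ι → ℝ, (∀ i, 0 ≤ b i) ∧ ∑ i, b i ^ 2 ≤ r * X x ∧
    ∀ y ∉ N, X x - weightedHammingDist b x y ≤ X y

variable {X : (∀ i, Ω i) → ℝ} {r : ℝ} {N : Set (∀ i, Ω i)}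

lemma HasDownwardCertificates.nonneg (hX : HasDownwardCertificates X r N) (hr : 0 < r)
    {x : ∀ i, Ω i} (hx : x ∉ N) : 0 ≤ X x := by
  obtain ⟨b, -, hbX, -⟩ := hX x hx
  exact nonneg_of_mul_nonneg_right ((Finset.sum_nonneg fun i _ => sq_nonneg (b i)).trans hbX) hr

lemma HasDownwardCertificates.exists_normalized (hX : HasDownwardCertificates X r N) (hr : 0 < r)
    {a u : ℝ} (ha : 0 ≤ a) (hau : a < u) {x : ∀ i, Ω i} (hux : u ≤ X x) (hx : x ∉ N) :
    ∃ b : ι → ℝ, (∀ i, 0 ≤ b i) ∧ ∑ i, b i ^ 2 ≤ 1 ∧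
      ∀ y ∈ {y | X y ≤ a} \ N, (u - a) / √(r * u) ≤ weightedHammingDist b x y := by
  obtain ⟨b, hb, hbX, hy⟩ := hX x hx
  have hrX : 0 < r * X x := mul_pos hr (ha.trans_lt (hau.trans_le hux))
  refine ⟨fun i => (√(r * X x))⁻¹ * b i, fun i => mul_nonneg (by positivity) (hb i), ?_,
    fun y ⟨hya, hyN⟩ => ?_⟩
  · simp only [mul_pow, ← Finset.mul_sum, inv_pow, Real.sq_sqrt hrX.le]
    exact inv_mul_le_one_of_le₀ hbX hrX.le
  · calc (u - a) / √(r * u) ≤ (X x - a) / √(r * X x) :=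
          sub_div_sqrt_mul_le_sub_div_sqrt_mul ha hau hux hr
      _ ≤ weightedHammingDist b x y / √(r * X x) := by
          have hya : X y ≤ a := hya
          gcongr
          linarith [hy y hyN]
      _ = weightedHammingDist (fun i => (√(r * X x))⁻¹ * b i) x y := by
          rw [weightedHammingDist_const_mul, div_eq_inv_mul]

variable [∀ i, MeasurableSpace (Ω i)] (μ : ∀ i, Measure (Ω i)) [∀ i, IsProbabilityMeasure (μ i)]

theorem HasDownwardCertificates.measureReal_mul_measureReal_le (hX : HasDownwardCertificates X r N)
    (hXm : Measurable X) (hN : MeasurableSet N) (hr : 0 < r) {a u v : ℝ} (hau : a < u)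
    (huv : u ≤ v) :
    (Measure.pi μ).real ({x | u ≤ X x} \ N) * (Measure.pi μ).real ({x | X x ≤ a} \ N) ≤
      Real.exp (-(u - a) ^ 2 / (4 * r * v)) := by
  rcases lt_or_ge a 0 with ha | ha
  · have hempty : {x | X x ≤ a} \ N = ∅ :=
      Set.eq_empty_of_forall_notMem fun x hx => (hx.1.trans_lt ha).not_ge (hX.nonneg hr hx.2)
    rw [hempty, measureReal_empty, mul_zero]
    positivity
  · have hru : 0 < r * u := mul_pos hr (ha.trans_lt hau)
    have hs : 0 ≤ (u - a) / √(r * u) := div_nonneg (by linarith) (by positivity)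
    calc _ ≤ Real.exp (-((u - a) / √(r * u)) ^ 2 / 4) :=
          talagrand_convexDistance μ ((measurableSet_le measurable_const hXm).diff hN)
            ((measurableSet_le hXm measurable_const).diff hN) hs fun x hx =>
              hX.exists_normalized hr ha hau hx.1 hx.2
      _ = Real.exp (-((u - a) ^ 2 / (4 * r * u))) := by
          rw [div_pow, Real.sq_sqrt hru.le, neg_div, div_div, mul_comm _ (4 : ℝ), mul_assoc]
      _ ≤ Real.exp (-(u - a) ^ 2 / (4 * r * v)) := by
          rw [neg_div]
          have hru4 : 0 < 4 * r * u := by linarith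
          gcongr

end DownwardCertificates

lemma measureReal_le_of_measureReal_diff_mul_le {E : Type*} [MeasurableSpace E] {μ : Measure E}
    [IsFiniteMeasure μ] {A B N : Set E} {q : ℝ} (hAB : μ.real (A \ N) * μ.real (B \ N) ≤ q)
    (hB : 1 / 2 ≤ μ.real B) (hq : 4 * q + 4 * μ.real N < 1) :
    μ.real A ≤ 2 * q + 2 * μ.real N := by
  have hA_diff : μ.real A - μ.real N ≤ μ.real (A \ N) := le_measureReal_sdiff
  have hB_diff : μ.real B - μ.real N ≤ μ.real (B \ N) := le_measureReal_sdiff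
  have hN : 0 ≤ μ.real N := measureReal_nonneg
  have hq0 : 0 ≤ q := (mul_nonneg measureReal_nonneg measureReal_nonneg).trans hAB
  by_contra! hlt
  have hprod : (2 * q + μ.real N) * (1 / 2 - μ.real N) < μ.real (A \ N) * μ.real (B \ N) :=
    mul_lt_mul (by linarith) (by linarith) (by linarith) measureReal_nonneg
  nlinarith [mul_nonneg hN (show 0 ≤ 1 / 2 - 2 * q - μ.real N by linarith)]

theorem stmt_13_general {ι : Type*} [Fintype ι] {Ω : ι → Type*} [∀ i, MeasurableSpace (Ω i)]
    (μ : ∀ i, Measure (Ω i)) [∀ i, IsProbabilityMeasure (μ i)] {X : (∀ i, Ω i) → ℝ} {r : ℝ}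
    {N : Set (∀ i, Ω i)} (hX : HasDownwardCertificates X r N) (hXm : Measurable X)
    (hN : MeasurableSet N) (hr : 0 < r) {m t : ℝ} (ht : 0 < t)
    (hm_le : 1 / 2 ≤ (Measure.pi μ).real {x | X x ≤ m})
    (hm_ge : 1 / 2 ≤ (Measure.pi μ).real {x | m ≤ X x}) :
    (Measure.pi μ).real {x | t < |X x - m|} ≤
      4 * Real.exp (-t ^ 2 / (4 * r * (m + t))) + 4 * (Measure.pi μ).real N := by
  set P := Measure.pi μ
  set q := Real.exp (-t ^ 2 / (4 * r * (m + t)))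
  rcases le_or_gt 1 (4 * q + 4 * P.real N) with hlarge | hsmall
  · exact measureReal_le_one.trans hlarge
  have hupper : P.real {x | m + t ≤ X x} ≤ 2 * q + 2 * P.real N := by
    refine measureReal_le_of_measureReal_diff_mul_le ?_ hm_le hsmall
    simpa only [add_sub_cancel_left] using
      hX.measureReal_mul_measureReal_le μ hXm hN hr (lt_add_of_pos_right m ht) le_rfl
  have hlower : P.real {x | X x ≤ m - t} ≤ 2 * q + 2 * P.real N := by
    refine measureReal_le_of_measureReal_diff_mul_le ?_ hm_ge hsmall
    rw [mul_comm]
    simpa only [sub_sub_cancel] using hX.measureReal_mul_measureReal_le μ hXm hN hr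
      (sub_lt_self m ht) (le_add_of_nonneg_right ht.le)
  calc P.real {x | t < |X x - m|}
      ≤ P.real ({x | m + t ≤ X x} ∪ {x | X x ≤ m - t}) := by
        refine measureReal_mono fun x (hx : t < |X x - m|) =>
          (lt_abs.1 hx).imp (fun h => ?_) fun h => ?_
        · exact (lt_sub_iff_add_lt'.1 h).le
        · exact (by linarith : X x < m - t).le
    _ ≤ P.real {x | m + t ≤ X x} + P.real {x | X x ≤ m - t} := measureReal_union_le _ _
    _ ≤ 4 * q + 4 * P.real N := by linarith

theorem stmt_13 {n : ℕ} (Ω : Fin n → Type) [∀ i, MeasureSpace (Ω i)]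
    [∀ i, IsProbabilityMeasure (volume : Measure (Ω i))]
    (X : (∀ i, Ω i) → ℝ) (hXmeas : Measurable X) (hX0 : ∀ x, 0 ≤ X x)
    (hXne : X ≠ 0)
    (r : ℝ) (hr : 0 < r)
    (Ωstar : Set (∀ i, Ω i)) (hΩstar : MeasurableSet Ωstar)
    (hcert : ∀ x : ∀ i, Ω i, ∃ b : Fin n → ℝ, (∀ i, 0 ≤ b i) ∧
      (∑ i, (b i) ^ 2 ≤ r * X x) ∧
      ∀ y : ∀ i, Ω i,
        X x - ∑ i ∈ Finset.univ.filter (fun i => x i ≠ y i), b i ≤ X y) :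
    ∀ t : ℝ, 0 < t → ∀ m : ℝ, IsMedian X m →
      ((prodMeasure Ω) {x | |X x - m| > t}).toReal ≤
        4 * Real.exp (-t ^ 2 / (4 * r * (m + t))) +
          4 * ((prodMeasure Ω) Ωstar).toReal := by
  intro t ht m hm
  refine stmt_13_general (fun i => volume) (N := Ωstar) (fun x _ => ?_) hXmeas hΩstar hr ht
    hm.1 hm.2
  obtain ⟨b, hb, hbX, hy⟩ := hcert x
  exact ⟨b, hb, hbX, fun y _ => hy y⟩
end
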